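/- Let m ≥ 2 and Δ ≥ 4 be integers and let 1 ≤ k ≤ m. Let G be the tree on n = m + Δ vertices obtained from the path p_1 p_2 … p_m by adding new vertices u, l_1, …, l_{Δ−1} together with the edge p_k u and the edges u l_i (1 ≤ i ≤ Δ−1). Then γ^ID(G) ≤ ((Δ−1)/Δ)·n. -/

import Mathlib

open SimpleGraph

/-- The closed neighborhood `N[v]` of a vertex `v` in `G`. -/
def closedNbhd {V : Type*} (G : SimpleGraph V) (v : V) : Set V :=
  insert v (G.neighborSet v)

/-- `C` is an identifying code of `G`: it dominates every vertex and the
closed neighborhoods of distinct vertices intersect `C` differently. -/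
def IsIDCode {V : Type*} (G : SimpleGraph V) (C : Set V) : Prop :=
  (∀ v, (closedNbhd G v ∩ C).Nonempty) ∧
  ∀ u w : V, u ≠ w → closedNbhd G u ∩ C ≠ closedNbhd G w ∩ C

/-- The identification number `γ^ID(G)`: the minimum size of an identifying code. -/
noncomputable def idNum {V : Type*} [Fintype V] (G : SimpleGraph V) : ℕ :=
  sInf {k | ∃ C : Set V, C.ncard = k ∧ IsIDCode G C}

/-- `G` is identifiable (closed-twin-free). -/
def Identifiable {V : Type*} (G : SimpleGraph V) : Prop :=
  ∀ u w : V, u ≠ w → closedNbhd G u ≠ closedNbhd G w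

/-- The maximum degree of a finite graph `G`. -/
noncomputable def maxDeg {V : Type*} [Fintype V] (G : SimpleGraph V) : ℕ :=
  Finset.univ.sup fun v => (G.neighborSet v).ncard

/-- `S` is a dominating set of `G`. -/
def IsDomSet {V : Type*} (G : SimpleGraph V) (S : Set V) : Prop :=
  ∀ v, (closedNbhd G v ∩ S).Nonempty

/-- The domination number `γ(G)`. -/
noncomputable def domNum {V : Type*} [Fintype V] (G : SimpleGraph V) : ℕ :=
  sInf {k | ∃ S : Set V, S.ncard = k ∧ IsDomSet G S}

/-- The star `K_{1,k}`: vertex `0` is adjacent to each of the `k` other vertices. -/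
def starGraph (k : ℕ) : SimpleGraph (Fin (k + 1)) :=
  SimpleGraph.fromRel fun a _ => a = 0

/-- The graph obtained from `G'` by appending a star with `k` extra leaves onto the
vertex `v`: we add a new universal vertex `u = Sum.inr none` adjacent to `v`,
and `k` new leaves `Sum.inr (some i)` adjacent to `u` (so the star has `k + 1`
leaves in total, one of which is identified with `v`, i.e. a `(k+1)`-star is
appended by one of its leaves onto `v`). -/
def appendStar {V : Type*} (G' : SimpleGraph V) (v : V) (k : ℕ) :
    SimpleGraph (V ⊕ Option (Fin k)) :=
  SimpleGraph.fromRel fun a b =>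
    (∃ x y, a = Sum.inl x ∧ b = Sum.inl y ∧ G'.Adj x y) ∨
    (a = Sum.inl v ∧ b = Sum.inr none) ∨
    (∃ i, a = Sum.inr none ∧ b = Sum.inr (some i))

/-! The code consists of all of the star except one leaf, and of the path except one vertex in
four. The omitted path vertices lie in a residue class modulo `4` that leaves the path dominated
and, when `m ≥ 3`, all its vertices separated; for `m = 2` the two path vertices are separated by
the centre of the star. So `γ^ID(G) ≤ 3m/4 + (Δ - 1)`, and `3/4 ≤ (Δ - 1)/Δ` because `Δ ≥ 4`. -/

section ClosedNbhd

variable {V : Type*} {G : SimpleGraph V} {C : Set V} {x x' y : V}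

theorem mem_closedNbhd : y ∈ closedNbhd G x ↔ y = x ∨ G.Adj x y :=
  Iff.rfl

theorem IsIDCode.injective_closedNbhd_inter (hC : IsIDCode G C) :
    Function.Injective (closedNbhd G · ∩ C) :=
  fun _ _ heq => not_not.1 fun hne => hC.2 _ _ hne heq

theorem closedNbhd_inter_ne (hyC : y ∈ C) (hyx : y ∈ closedNbhd G x)
    (hyx' : y ∉ closedNbhd G x') : closedNbhd G x ∩ C ≠ closedNbhd G x' ∩ C :=
  fun h => hyx' (h.subset ⟨hyx, hyC⟩).1

theorem idNum_le_ncard [Fintype V] (hC : IsIDCode G C) : idNum G ≤ C.ncard :=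
  Nat.sInf_le ⟨C, rfl, hC⟩

end ClosedNbhd

section AppendStar

variable {V : Type*} {G : SimpleGraph V} {v x y : V} {k : ℕ} {i j : Fin k}

theorem inl_mem_closedNbhd_appendStar_inl :
    Sum.inl y ∈ closedNbhd (appendStar G v k) (Sum.inl x) ↔ y ∈ closedNbhd G x := by
  simp only [mem_closedNbhd, appendStar, fromRel_adj]
  grind [G.adj_comm, G.ne_of_adj]

theorem center_mem_closedNbhd_appendStar_inl :
    Sum.inr none ∈ closedNbhd (appendStar G v k) (Sum.inl x) ↔ x = v := by
  simp [mem_closedNbhd, appendStar]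

theorem leaf_notMem_closedNbhd_appendStar_inl :
    Sum.inr (some i) ∉ closedNbhd (appendStar G v k) (Sum.inl x) := by
  simp [mem_closedNbhd, appendStar]

theorem inr_mem_closedNbhd_appendStar_center (o : Option (Fin k)) :
    Sum.inr o ∈ closedNbhd (appendStar G v k) (Sum.inr none) := by
  cases o <;> simp [mem_closedNbhd, appendStar]

theorem inl_notMem_closedNbhd_appendStar_leaf :
    Sum.inl y ∉ closedNbhd (appendStar G v k) (Sum.inr (some i)) := by
  simp [mem_closedNbhd, appendStar]

theorem center_mem_closedNbhd_appendStar_leaf :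
    Sum.inr none ∈ closedNbhd (appendStar G v k) (Sum.inr (some i)) := by
  simp [mem_closedNbhd, appendStar]

theorem leaf_mem_closedNbhd_appendStar_leaf :
    Sum.inr (some j) ∈ closedNbhd (appendStar G v k) (Sum.inr (some i)) ↔ j = i := by
  simp [mem_closedNbhd, appendStar]

/-- The candidate code of `appendStar G v k` made of the vertices in `C` of `G`, the centre of the
star, and the leaves indexed by `L`. -/
def appendStarCode (C : Set V) (L : Set (Fin k)) : Set (V ⊕ Option (Fin k)) :=
  Sum.inl '' C ∪ Sum.inr '' insert none (some '' L)

variable {C : Set V} {L : Set (Fin k)}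

theorem inl_mem_appendStarCode : Sum.inl x ∈ appendStarCode C L ↔ x ∈ C := by
  simp [appendStarCode]

theorem center_mem_appendStarCode : Sum.inr none ∈ appendStarCode C L := by
  simp [appendStarCode]

theorem leaf_mem_appendStarCode : Sum.inr (some i) ∈ appendStarCode C L ↔ i ∈ L := by
  simp [appendStarCode]

theorem ncard_appendStarCode [Finite V] :
    (appendStarCode C L).ncard = C.ncard + (L.ncard + 1) := by
  have hdisj : Disjoint (Sum.inl '' C) (Sum.inr '' insert none (some '' L)) :=
    Set.disjoint_image_inl_image_inr
  rw [appendStarCode, Set.ncard_union_eq hdisj, Set.ncard_image_of_injective _ Sum.inl_injective,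
    Set.ncard_image_of_injective _ Sum.inr_injective, Set.ncard_insert_of_notMem (by simp),
    Set.ncard_image_of_injective _ (Option.some_injective _)]

theorem isDomSet_appendStarCode (hC : IsDomSet G C) :
    IsDomSet (appendStar G v k) (appendStarCode C L) := by
  rintro (x | _ | i)
  · obtain ⟨y, hyx, hyC⟩ := hC x
    exact ⟨Sum.inl y, inl_mem_closedNbhd_appendStar_inl.2 hyx, inl_mem_appendStarCode.2 hyC⟩
  · exact ⟨_, inr_mem_closedNbhd_appendStar_center none, center_mem_appendStarCode⟩
  · exact ⟨_, center_mem_closedNbhd_appendStar_leaf, center_mem_appendStarCode⟩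

theorem closedNbhd_appendStar_inl_inter_ne (hsep : Set.InjOn (closedNbhd G · ∩ C) {v}ᶜ)
    (hxy : x ≠ y) :
    closedNbhd (appendStar G v k) (Sum.inl x) ∩ appendStarCode C L ≠
      closedNbhd (appendStar G v k) (Sum.inl y) ∩ appendStarCode C L := by
  intro heq
  have hv : x = v ↔ y = v := by
    simpa [center_mem_closedNbhd_appendStar_inl, center_mem_appendStarCode]
      using Set.ext_iff.1 heq (Sum.inr none)
  have hxv : x ≠ v := fun h => hxy (h.trans (hv.1 h).symm)
  refine hxy (hsep hxv (mt hv.2 hxv) (Set.ext fun z => ?_))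
  simpa [inl_mem_closedNbhd_appendStar_inl, inl_mem_appendStarCode]
    using Set.ext_iff.1 heq (Sum.inl z)

theorem closedNbhd_appendStar_center_inter_ne_inl (hL : L.Nonempty) :
    closedNbhd (appendStar G v k) (Sum.inr none) ∩ appendStarCode C L ≠
      closedNbhd (appendStar G v k) (Sum.inl x) ∩ appendStarCode C L := by
  obtain ⟨i, hi⟩ := hL
  exact closedNbhd_inter_ne (leaf_mem_appendStarCode.2 hi)
    (inr_mem_closedNbhd_appendStar_center (some i)) leaf_notMem_closedNbhd_appendStar_inl

theorem closedNbhd_appendStar_center_inter_ne_leaf (hL : L.Nontrivial) :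
    closedNbhd (appendStar G v k) (Sum.inr none) ∩ appendStarCode C L ≠
      closedNbhd (appendStar G v k) (Sum.inr (some i)) ∩ appendStarCode C L := by
  obtain ⟨j, hj, hji⟩ := hL.exists_ne i
  exact closedNbhd_inter_ne (leaf_mem_appendStarCode.2 hj)
    (inr_mem_closedNbhd_appendStar_center (some j)) (mt leaf_mem_closedNbhd_appendStar_leaf.1 hji)

theorem closedNbhd_appendStar_inl_inter_ne_leaf (hC : IsDomSet G C) :
    closedNbhd (appendStar G v k) (Sum.inl x) ∩ appendStarCode C L ≠
      closedNbhd (appendStar G v k) (Sum.inr (some i)) ∩ appendStarCode C L := by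
  obtain ⟨y, hyx, hyC⟩ := hC x
  exact closedNbhd_inter_ne (inl_mem_appendStarCode.2 hyC)
    (inl_mem_closedNbhd_appendStar_inl.2 hyx) inl_notMem_closedNbhd_appendStar_leaf

theorem closedNbhd_appendStar_leaf_inter_ne (hL : Lᶜ.Subsingleton) (hij : i ≠ j) :
    closedNbhd (appendStar G v k) (Sum.inr (some i)) ∩ appendStarCode C L ≠
      closedNbhd (appendStar G v k) (Sum.inr (some j)) ∩ appendStarCode C L := by
  by_cases hi : i ∈ L
  · exact closedNbhd_inter_ne (leaf_mem_appendStarCode.2 hi)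
      (leaf_mem_closedNbhd_appendStar_leaf.2 rfl) (mt leaf_mem_closedNbhd_appendStar_leaf.1 hij)
  · have hj : j ∈ L := not_not.1 fun hj => hij (hL hi hj)
    exact (closedNbhd_inter_ne (leaf_mem_appendStarCode.2 hj)
      (leaf_mem_closedNbhd_appendStar_leaf.2 rfl)
      (mt leaf_mem_closedNbhd_appendStar_leaf.1 hij.symm)).symm

/- The centre is adjacent to `v` and to no other vertex of `G`, so it separates `v` from the rest
of `G`. -/
theorem isIDCode_appendStarCode (hC : IsDomSet G C)
    (hsep : Set.InjOn (closedNbhd G · ∩ C) {v}ᶜ) (hL : L.Nontrivial) (hLc : Lᶜ.Subsingleton) :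
    IsIDCode (appendStar G v k) (appendStarCode C L) := by
  refine ⟨isDomSet_appendStarCode hC, ?_⟩
  rintro (x | _ | i) (y | _ | j) hne
  · exact closedNbhd_appendStar_inl_inter_ne hsep (by simpa using hne)
  · exact (closedNbhd_appendStar_center_inter_ne_inl hL.nonempty).symm
  · exact closedNbhd_appendStar_inl_inter_ne_leaf hC
  · exact closedNbhd_appendStar_center_inter_ne_inl hL.nonempty
  · exact absurd rfl hne
  · exact closedNbhd_appendStar_center_inter_ne_leaf hL
  · exact (closedNbhd_appendStar_inl_inter_ne_leaf hC).symm
  · exact (closedNbhd_appendStar_center_inter_ne_leaf hL).symm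
  · exact closedNbhd_appendStar_leaf_inter_ne hLc (by simpa using hne)

theorem idNum_appendStar_le [Fintype V] (hC : IsDomSet G C)
    (hsep : Set.InjOn (closedNbhd G · ∩ C) {v}ᶜ) (hk : 3 ≤ k) :
    idNum (appendStar G v k) ≤ C.ncard + k := by
  let L : Set (Fin k) := {⟨0, by omega⟩}ᶜ
  have hLc : Lᶜ.Subsingleton := by simp [L]
  have hcard : L.ncard + 1 = k := by
    simpa [L, add_comm] using Set.ncard_add_ncard_compl Lᶜ
  have hL : L.Nontrivial := Set.one_lt_ncard_iff_nontrivial.1 (by omega)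
  simpa [ncard_appendStarCode, hcard] using
    idNum_le_ncard (isIDCode_appendStarCode hC hsep hL hLc)

end AppendStar

section PathGraph

variable {m : ℕ} {x y : Fin m}

theorem mem_closedNbhd_pathGraph :
    y ∈ closedNbhd (pathGraph m) x ↔ y.val ≤ x.val + 1 ∧ x.val ≤ y.val + 1 := by
  rw [mem_closedNbhd, pathGraph_adj, Fin.ext_iff]
  omega

/-- A code of the path on `m` vertices omitting at least a quarter of them. The residue
`m % 4 / 2` puts an omitted vertex among the first two, and neither of the two vertices at
distance two from an end, whose absence would make that end and its neighbour twins. -/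
def pathCode (m : ℕ) : Set (Fin m) :=
  {i | i.val % 4 ≠ m % 4 / 2}

theorem mem_pathCode : x ∈ pathCode m ↔ x.val % 4 ≠ m % 4 / 2 :=
  Iff.rfl

theorem le_four_mul_ncard_compl_pathCode (m : ℕ) : m ≤ 4 * (pathCode m)ᶜ.ncard := by
  let f : Fin ((m + 3) / 4) → Fin m := fun j => ⟨4 * j + m % 4 / 2, by omega⟩
  have hinj : Function.Injective f := fun i j hij => by
    have : 4 * i.val + m % 4 / 2 = 4 * j.val + m % 4 / 2 := congrArg Fin.val hij
    omega
  have hsub : Set.range f ⊆ (pathCode m)ᶜ := by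
    rintro _ ⟨j, rfl⟩
    simp only [Set.mem_compl_iff, mem_pathCode, f]
    omega
  have hcard : (m + 3) / 4 ≤ (pathCode m)ᶜ.ncard := by
    simpa [Set.ncard_range_of_injective hinj] using Set.ncard_le_ncard hsub
  omega

theorem four_mul_ncard_pathCode_le (m : ℕ) : 4 * (pathCode m).ncard ≤ 3 * m := by
  have hadd := Set.ncard_add_ncard_compl (pathCode m)
  rw [Nat.card_fin] at hadd
  have := le_four_mul_ncard_compl_pathCode m
  omega

theorem isDomSet_pathCode (hm : 2 ≤ m) : IsDomSet (pathGraph m) (pathCode m) := by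
  intro x
  obtain ⟨y, hy, hyC⟩ : ∃ y : Fin m, (y.val ≤ x.val + 1 ∧ x.val ≤ y.val + 1) ∧ y ∈ pathCode m := by
    by_cases hx : x ∈ pathCode m
    · exact ⟨x, by omega, hx⟩
    simp only [mem_pathCode, not_not] at hx ⊢
    rcases Nat.eq_zero_or_pos x.val with h0 | hpos
    · exact ⟨⟨1, by omega⟩, by simp only; omega, by simp only; omega⟩
    · exact ⟨⟨x - 1, by omega⟩, by simp only; omega, by simp only; omega⟩
  exact ⟨y, mem_closedNbhd_pathGraph.2 hy, hyC⟩

/- The neighbourhoods of `x` and `x + 1` differ exactly in `x - 1` and `x + 2`. -/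
theorem closedNbhd_pathGraph_succ_inter_ne (hm : 3 ≤ m) (hxy : x.val + 1 = y.val) :
    closedNbhd (pathGraph m) x ∩ pathCode m ≠ closedNbhd (pathGraph m) y ∩ pathCode m := by
  by_cases hprev : 1 ≤ x.val ∧ (x.val - 1) % 4 ≠ m % 4 / 2
  · refine closedNbhd_inter_ne (y := ⟨x - 1, by omega⟩) hprev.2 ?_ ?_ <;>
      rw [mem_closedNbhd_pathGraph] <;> simp only <;> omega
  · have hlt : x.val + 2 < m := by omega
    have hnext : (x.val + 2) % 4 ≠ m % 4 / 2 := by omega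
    refine (closedNbhd_inter_ne (y := ⟨x + 2, hlt⟩) hnext ?_ ?_).symm <;>
      rw [mem_closedNbhd_pathGraph] <;> simp only <;> omega

theorem closedNbhd_pathGraph_inter_ne_of_add_two_le (hxy : x.val + 2 ≤ y.val) :
    closedNbhd (pathGraph m) x ∩ pathCode m ≠ closedNbhd (pathGraph m) y ∩ pathCode m := by
  by_cases hx : x ∈ pathCode m
  · refine closedNbhd_inter_ne hx ?_ ?_ <;> rw [mem_closedNbhd_pathGraph] <;> omega
  by_cases hy : y ∈ pathCode m
  · refine (closedNbhd_inter_ne hy ?_ ?_).symm <;> rw [mem_closedNbhd_pathGraph] <;> omega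
  simp only [mem_pathCode, not_not] at hx hy
  have hfar : x.val + 4 ≤ y.val := by omega
  have hnext : (x.val + 1) % 4 ≠ m % 4 / 2 := by omega
  refine closedNbhd_inter_ne (y := ⟨x + 1, by omega⟩) hnext ?_ fun hmem => ?_
  · rw [mem_closedNbhd_pathGraph]
    simp only
    omega
  · have hnear : y.val ≤ x.val + 2 := (mem_closedNbhd_pathGraph.1 hmem).2
    exact absurd (hfar.trans hnear) (by omega)

theorem closedNbhd_pathGraph_inter_ne_of_lt (hm : 3 ≤ m) (hxy : x < y) :
    closedNbhd (pathGraph m) x ∩ pathCode m ≠ closedNbhd (pathGraph m) y ∩ pathCode m := by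
  rcases (Nat.succ_le_of_lt hxy).eq_or_lt with hsucc | hfar
  · exact closedNbhd_pathGraph_succ_inter_ne hm hsucc
  · exact closedNbhd_pathGraph_inter_ne_of_add_two_le hfar

theorem isIDCode_pathCode (hm : 3 ≤ m) : IsIDCode (pathGraph m) (pathCode m) :=
  ⟨isDomSet_pathCode (by omega), fun _ _ hne => hne.lt_or_gt.elim
    (closedNbhd_pathGraph_inter_ne_of_lt hm) fun h =>
      (closedNbhd_pathGraph_inter_ne_of_lt hm h).symm⟩

theorem injOn_closedNbhd_inter_pathCode (hm : 2 ≤ m) (v : Fin m) :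
    Set.InjOn (closedNbhd (pathGraph m) · ∩ pathCode m) {v}ᶜ := by
  rcases hm.eq_or_lt with rfl | hm
  · intro x hx y hy _
    simp only [Set.mem_compl_singleton_iff] at hx hy
    omega
  · exact (isIDCode_pathCode hm).injective_closedNbhd_inter.injOn

theorem four_mul_idNum_appendStar_pathGraph_le (hm : 2 ≤ m) (v : Fin m) {k : ℕ} (hk : 3 ≤ k) :
    4 * idNum (appendStar (pathGraph m) v k) ≤ 3 * m + 4 * k := by
  have hle := idNum_appendStar_le (isDomSet_pathCode hm) (injOn_closedNbhd_inter_pathCode hm v) hk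
  have hcard := four_mul_ncard_pathCode_le m
  omega

end PathGraph

/-- let `G` be the tree on `n = m + Δ` vertices obtained from the path
`p₁ … p_m` (`m ≥ 2`) by appending a `Δ`-star with `Δ ≥ 4` by one of its leaves onto
the vertex `p_k`. Then `γ^ID(G) ≤ ((Δ−1)/Δ)·n`. -/
theorem stmt_10 (m Δ k : ℕ) (hm : 2 ≤ m) (hΔ : 4 ≤ Δ) (hk1 : 1 ≤ k) (hkm : k ≤ m) :
    (idNum (appendStar (SimpleGraph.pathGraph m) ⟨k - 1, by omega⟩ (Δ - 1)) : ℝ) ≤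
      ((Δ : ℝ) - 1) / Δ * ((m : ℝ) + (Δ : ℝ)) := by
  have hbound : 4 * (idNum (appendStar (pathGraph m) ⟨k - 1, by omega⟩ (Δ - 1)) : ℝ) ≤
      3 * m + 4 * (Δ - 1) := by
    have hnat := four_mul_idNum_appendStar_pathGraph_le hm ⟨k - 1, by omega⟩
      (show 3 ≤ Δ - 1 by omega)
    rw [← Nat.cast_pred (by omega : 0 < Δ)]
    exact_mod_cast hnat
  have hΔ' : (4 : ℝ) ≤ Δ := by exact_mod_cast hΔ
  have hratio : (3 : ℝ) / 4 ≤ (Δ - 1) / Δ := by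
    rw [div_le_div_iff₀ (by norm_num) (by linarith)]
    linarith
  calc (idNum (appendStar (pathGraph m) ⟨k - 1, by omega⟩ (Δ - 1)) : ℝ)
      ≤ 3 / 4 * m + (Δ - 1) := by linarith
    _ ≤ (Δ - 1) / Δ * m + (Δ - 1) := by gcongr
    _ = ((Δ : ℝ) - 1) / Δ * ((m : ℝ) + (Δ : ℝ)) := by
      rw [mul_add, div_mul_cancel₀ _ (by linarith)]
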